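/- Fix H ∈ (0,1) and c > 0, and let φ_c be the localisation function. Then for every real x ≠ 0, ∫₀¹ φ_c(t·x)·(1 − t) dt ≤ (3/2)·c^{1/(2H)}·|x|^{−1}. -/

import Mathlib

/-- The localisation function `φ_c(x) = min(1, c^{3/(2H)} |x|^{-3})`, with the convention
`φ_c(0) = 1`. -/
noncomputable def locFun (H c : ℝ) (x : ℝ) : ℝ :=
  if x = 0 then 1 else min 1 (c ^ ((3 : ℝ) / (2 * H)) * |x| ^ (-3 : ℝ))

theorem locFun_le_one (H c y : ℝ) : locFun H c y ≤ 1 := by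
  unfold locFun
  split_ifs
  · exact le_rfl
  · exact min_le_left _ _

theorem locFun_nonneg (H c y : ℝ) (hc : 0 < c) : 0 ≤ locFun H c y := by
  unfold locFun
  split_ifs
  · exact zero_le_one
  · exact le_min zero_le_one (by positivity)

theorem locFun_measurable (H c : ℝ) : Measurable (locFun H c) := by
  unfold locFun
  refine Measurable.ite (measurableSet_singleton (0 : ℝ)) measurable_const ?_
  fun_prop

theorem locFun_le (H c x t : ℝ) (hc : 0 < c) (hx : x ≠ 0) (ht : 0 < t) :
    locFun H c (t * x) ≤ (c ^ ((1 : ℝ) / (2 * H)) * |x|⁻¹) ^ 3 * t ^ (-3 : ℤ) := by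
  have hne : t * x ≠ 0 := mul_ne_zero ht.ne' hx
  have hxp : 0 < |x| := abs_pos.mpr hx
  unfold locFun
  rw [if_neg hne]
  refine (min_le_right _ _).trans (le_of_eq ?_)
  have h1 : c ^ ((3 : ℝ) / (2 * H)) = (c ^ ((1 : ℝ) / (2 * H))) ^ 3 := by
    rw [← Real.rpow_natCast, ← Real.rpow_mul hc.le]
    congr 1
    push_cast
    ring
  have h2 : |t * x| ^ (-3 : ℝ) = (t⁻¹) ^ 3 * (|x|⁻¹) ^ 3 := by
    rw [abs_mul, abs_of_pos ht, Real.rpow_neg (by positivity)]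
    have : (t * |x|) ^ (3 : ℝ) = (t * |x|) ^ (3 : ℕ) := by
      rw [← Real.rpow_natCast]
      norm_num
    rw [this, mul_pow, mul_inv, inv_pow, inv_pow]
  have h3 : t ^ (-3 : ℤ) = (t⁻¹) ^ 3 := by
    rw [zpow_neg, inv_pow]
    norm_cast
  rw [h1, h2, h3]
  ring

/-- For `H ∈ (0,1)`, `c > 0` and `x ≠ 0`,
`∫₀¹ φ_c(t x) (1 - t) dt ≤ (3/2) c^{1/(2H)} |x|⁻¹`. -/
theorem stmt14 (H c : ℝ) (hH0 : 0 < H) (hH1 : H < 1) (hc : 0 < c) (x : ℝ) (hx : x ≠ 0) :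
    ∫ t in (0 : ℝ)..1, locFun H c (t * x) * (1 - t)
      ≤ (3 / 2) * c ^ ((1 : ℝ) / (2 * H)) * |x|⁻¹ := by
  have hxp : 0 < |x| := abs_pos.mpr hx
  have hle := fun t => locFun_le H c x t hc hx
  rw [mul_assoc]
  have ha : 0 < c ^ ((1 : ℝ) / (2 * H)) * |x|⁻¹ := by positivity
  generalize c ^ ((1 : ℝ) / (2 * H)) * |x|⁻¹ = a at hle ha ⊢
  have hint : ∀ p q : ℝ,
      IntervalIntegrable (fun t => locFun H c (t * x) * (1 - t)) MeasureTheory.volume p q := by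
    intro p q
    have hg : IntervalIntegrable (fun t : ℝ => |1 - t|) MeasureTheory.volume p q :=
      (by fun_prop : Continuous fun t : ℝ => |1 - t|).intervalIntegrable p q
    refine hg.mono_fun ?_ ?_
    · have := (locFun_measurable H c).comp (measurable_id.mul_const x)
      exact (this.mul (measurable_const.sub measurable_id)).aestronglyMeasurable
    · refine Filter.Eventually.of_forall fun t => ?_
      simp only [Real.norm_eq_abs, abs_mul, abs_abs]
      rw [abs_of_nonneg (locFun_nonneg H c _ hc)]
      exact mul_le_of_le_one_left (abs_nonneg _) (locFun_le_one _ _ _)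
  have hA : ∀ b : ℝ, 0 ≤ b → b ≤ 1 →
      ∫ t in (0 : ℝ)..b, locFun H c (t * x) * (1 - t) ≤ b - b ^ 2 / 2 := by
    intro b hb0 hb1
    have : ∫ t in (0 : ℝ)..b, (1 - t) = b - b ^ 2 / 2 := by
      rw [intervalIntegral.integral_sub (by simp) (by simp)]
      simp
    rw [← this]
    refine intervalIntegral.integral_mono_on hb0 (hint _ _)
      ((by fun_prop : Continuous fun t : ℝ => 1 - t).intervalIntegrable _ _) ?_
    intro t ht
    exact mul_le_of_le_one_left (by linarith [ht.2]) (locFun_le_one _ _ _)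
  rcases le_total 1 a with h | h
  · have := hA 1 zero_le_one le_rfl
    linarith
  · have h0 : (0 : ℝ) ∉ Set.uIcc a 1 := by
      rw [Set.uIcc_of_le h]
      exact fun h' => absurd h'.1 (not_le.mpr ha)
    have h1 := hA a ha.le h
    have h2 : ∫ t in a..1, locFun H c (t * x) * (1 - t) ≤ ∫ t in a..1, a ^ 3 * t ^ (-3 : ℤ) := by
      refine intervalIntegral.integral_mono_on h (hint _ _)
        ((intervalIntegral.intervalIntegrable_zpow (Or.inr h0)).const_mul _) ?_
      intro t ht
      have ht0 : 0 < t := ha.trans_le ht.1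
      exact (mul_le_of_le_one_right (locFun_nonneg H c _ hc) (by linarith)).trans (hle t ht0)
    have h3 : ∫ t in a..1, a ^ 3 * t ^ (-3 : ℤ) = a / 2 - a ^ 3 / 2 := by
      rw [intervalIntegral.integral_const_mul, integral_zpow (Or.inr ⟨by norm_num, h0⟩)]
      have : a ^ (-3 + 1 : ℤ) = (a ^ 2)⁻¹ := by
        norm_num
      rw [this]
      norm_num
      field_simp
      ring
    rw [← intervalIntegral.integral_add_adjacent_intervals (hint 0 a) (hint a 1)]
    have : 0 < a ^ 3 := by positivity
    nlinarith [sq_nonneg a]
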